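/- The minimal period of the Narayana sequence modulo 37 is 342, which equals (p² − 1)/4 for p = 37; in particular the minimal period is a proper divisor of p² − 1. -/

import Mathlib

/-!
Modulo 37 the recurrence is the iteration of the map `(a, b, c) ↦ (b, c, c + a)` on triples of
residues, started at `(0, 1, 1)`; `k` is a period of the sequence exactly when the starting triple
is a periodic point of period `k` (`narayana_periodic_iff`). Periods of a point are closed under
gcd, so once 342 = 2 · 3² · 19 is seen to be a period, minimality only requires ruling out the
maximal proper divisors 342/2 = 171, 342/3 = 114 and 342/19 = 18. These four facts are computed.
-/

/-- The Narayana sequence: u₀ = 0, u₁ = 1, u₂ = 1, u_{n+3} = u_{n+2} + u_n. -/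
def narayana : ℕ → ℕ
  | 0 => 0
  | 1 => 1
  | 2 => 1
  | n + 3 => narayana (n + 2) + narayana n

/-- The shift map of the Narayana recurrence modulo 37, acting on the window
`(u_n, u_{n+1}, u_{n+2})` of canonical representatives in `{0, …, 36}`. -/
def narayanaStep (s : ℕ × ℕ × ℕ) : ℕ × ℕ × ℕ := (s.2.1, s.2.2, (s.2.2 + s.1) % 37)

lemma narayanaStep_iterate (n : ℕ) :
    narayanaStep^[n] (0, 1, 1) =
      (narayana n % 37, narayana (n + 1) % 37, narayana (n + 2) % 37) := by
  induction n with
  | zero => rfl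
  | succ n ih =>
    rw [Function.iterate_succ_apply', ih]
    simp [narayanaStep, narayana, Nat.add_mod]

lemma narayana_periodic_iff (k : ℕ) :
    (∀ n, narayana (n + k) ≡ narayana n [MOD 37]) ↔
      Function.IsPeriodicPt narayanaStep k (0, 1, 1) := by
  constructor
  · intro h
    have h0 : narayana k % 37 = 0 := by simpa [Nat.ModEq, narayana] using h 0
    have h1 : narayana (k + 1) % 37 = 1 := by
      simpa [Nat.ModEq, narayana, Nat.add_comm] using h 1
    have h2 : narayana (k + 2) % 37 = 1 := by
      simpa [Nat.ModEq, narayana, Nat.add_comm] using h 2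
    rw [Function.IsPeriodicPt, Function.IsFixedPt, narayanaStep_iterate, h0, h1, h2]
  · intro h n
    have e : narayanaStep^[n + k] (0, 1, 1) = narayanaStep^[n] (0, 1, 1) := by
      rw [Function.iterate_add_apply, h.eq]
    rw [narayanaStep_iterate, narayanaStep_iterate] at e
    exact congrArg Prod.fst e

/-- Every proper divisor of 342 divides one of `342 / 2`, `342 / 3`, `342 / 19`. -/
lemma dvd_of_properDivisor_342 :
    ∀ d ∈ Nat.properDivisors 342, d ∣ 171 ∨ d ∣ 114 ∨ d ∣ 18 := by
  decide +kernel

/-- The minimal period of the Narayana sequence modulo 37 is 342. -/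
theorem narayana_period_mod_37 :
    IsLeast {k | 0 < k ∧ ∀ n, narayana (n + k) ≡ narayana n [MOD 37]} 342 ∧
    (342 : ℕ) = (37 ^ 2 - 1) / 4 ∧ (342 : ℕ) ∣ 37 ^ 2 - 1 ∧ (342 : ℕ) ≠ 37 ^ 2 - 1 := by
  have h342 : Function.IsPeriodicPt narayanaStep 342 (0, 1, 1) := by
    change narayanaStep^[342] (0, 1, 1) = (0, 1, 1)
    decide +kernel
  have h171 : ¬ Function.IsPeriodicPt narayanaStep 171 (0, 1, 1) := by
    change ¬ narayanaStep^[171] (0, 1, 1) = (0, 1, 1)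
    decide +kernel
  have h114 : ¬ Function.IsPeriodicPt narayanaStep 114 (0, 1, 1) := by
    change ¬ narayanaStep^[114] (0, 1, 1) = (0, 1, 1)
    decide +kernel
  have h18 : ¬ Function.IsPeriodicPt narayanaStep 18 (0, 1, 1) := by
    change ¬ narayanaStep^[18] (0, 1, 1) = (0, 1, 1)
    decide +kernel
  refine ⟨⟨⟨by norm_num, (narayana_periodic_iff 342).2 h342⟩, ?_⟩,
    by norm_num, by norm_num, by norm_num⟩
  rintro k ⟨hk, hper⟩
  by_contra! hlt
  have hg := ((narayana_periodic_iff k).1 hper).gcd h342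
  have hmem : k.gcd 342 ∈ Nat.properDivisors 342 :=
    Nat.mem_properDivisors.2
      ⟨Nat.gcd_dvd_right k 342, (Nat.gcd_le_left 342 hk).trans_lt hlt⟩
  rcases dvd_of_properDivisor_342 _ hmem with h | h | h
  · exact h171 (hg.trans_dvd h)
  · exact h114 (hg.trans_dvd h)
  · exact h18 (hg.trans_dvd h)
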